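/- The set of unstratified well-formed formulae of set theory is not context-free. -/

import Mathlib

/-!
By Higman's lemma a context-free language satisfies a shrinking lemma, a variant of the pumping
lemma: in every long word, some factor of bounded length `p` can be replaced by a proper subsequence
of itself without leaving the language. Indeed a nonterminal derives only finitely many
subsequence-minimal words, so a parse tree yielding a long word has a lowest node whose yield is not
minimal, and this yield is short.

Apply this to the unstratified formula `[x ≐ y → x ∈ y]`, where `x` has `a = p` primes and `y` has
`b = 2 * p + 1`. The shrunken word is again a formula; it is a subsequence of the old one which
keeps more than three symbols other than primes, and this forces the form `[x' ≐ y' → x'' ∈ y'']`.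
The replaced factor is too short to meet both `x` and `x''`, or both `y` and `y''`, and the
numbers of primes of `x''` and `y''` stay apart. So `x'' ≠ y''` and `{x', y'} ≠ {x'', y''}`, and
the shrunken formula is stratified.
-/

/-- Alphabet of the usual syntax of set theory. -/
inductive Alph : Type
  | lb | rb | imp | all | deq | mem | w | prime | bot
deriving DecidableEq

/-- Well-formed formulae of set theory; variables are naturals (number of primes). -/
inductive Fm : Type
  | bot : Fm
  | eq : ℕ → ℕ → Fm
  | mem : ℕ → ℕ → Fm
  | imp : Fm → Fm → Fm
  | all : ℕ → Fm → Fm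
deriving DecidableEq

/-- The string `w'^n` for the variable with `n` primes. -/
def varStr (n : ℕ) : List Alph := Alph.w :: List.replicate n Alph.prime

/-- The string of symbols of a formula. -/
def Fm.str : Fm → List Alph
  | .bot => [Alph.bot]
  | .eq x y => varStr x ++ [Alph.deq] ++ varStr y
  | .mem x y => varStr x ++ [Alph.mem] ++ varStr y
  | .imp φ ψ => [Alph.lb] ++ φ.str ++ [Alph.imp] ++ ψ.str ++ [Alph.rb]
  | .all x φ => [Alph.lb, Alph.all] ++ varStr x ++ [Alph.rb] ++ φ.str

/-- Pairs `(x, y)` such that `x ∈ y` occurs as an atomic subformula. -/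
def Fm.memPairs : Fm → Finset (ℕ × ℕ)
  | .bot => ∅
  | .eq _ _ => ∅
  | .mem x y => {(x, y)}
  | .imp φ ψ => φ.memPairs ∪ ψ.memPairs
  | .all _ φ => φ.memPairs

/-- Pairs `(x, y)` such that `x ≐ y` occurs as an atomic subformula. -/
def Fm.eqPairs : Fm → Finset (ℕ × ℕ)
  | .bot => ∅
  | .eq x y => {(x, y)}
  | .mem _ _ => ∅
  | .imp φ ψ => φ.eqPairs ∪ ψ.eqPairs
  | .all _ φ => φ.eqPairs

/-- A formula is stratified if some integer assignment to variables satisfies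
`σ x = σ y - 1` for subformulae `x ∈ y` and `σ x = σ y` for subformulae `x ≐ y`. -/
def Fm.Stratified (φ : Fm) : Prop :=
  ∃ σ : ℕ → ℤ, (∀ p ∈ φ.memPairs, σ p.1 = σ p.2 - 1) ∧ (∀ p ∈ φ.eqPairs, σ p.1 = σ p.2)

open List

section Sublist

variable {α : Type*}

/-- Higman's lemma for equality of letters. -/
theorem wellQuasiOrdered_sublist [Finite α] :
    WellQuasiOrdered (Sublist : List α → List α → Prop) := by
  have hforall₂ := Set.PartiallyWellOrderedOn.partiallyWellOrderedOn_sublistForall₂ (· = ·)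
    (Set.finite_univ (α := α)).partiallyWellOrderedOn
  intro f
  obtain ⟨i, j, hij, h⟩ := hforall₂ fun n => ⟨f n, fun _ _ => trivial⟩
  obtain ⟨l, hl, hsub⟩ := sublistForall₂_iff.1 h
  rw [forall₂_eq_eq_eq] at hl
  subst hl
  exact ⟨i, j, hij, hsub⟩

theorem exists_forall_exists_sublist_length_le [Finite α] (L : Set (List α)) :
    ∃ K : ℕ, ∀ v ∈ L, ∃ v' ∈ L, v' <+ v ∧ v'.length ≤ K := by
  let M : Set (List α) := {v ∈ L | ∀ v' ∈ L, v' <+ v → v' = v}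
  have hM : M.Finite := IsAntichain.finite_of_wellQuasiOrdered
    (fun _ hv _ hw hne hvw => hne (hw.2 _ hv.1 hvw)) wellQuasiOrdered_sublist
  obtain ⟨K, hK⟩ := (hM.image length).bddAbove
  refine ⟨K, fun v => ?_⟩
  induction v using (measure length).wf.induction with
  | _ v ih =>
    intro hv
    by_cases hmin : v ∈ M
    · exact ⟨v, hv, Sublist.refl v, hK ⟨v, hmin, rfl⟩⟩
    · obtain ⟨w, hw, hwv, hne⟩ : ∃ w ∈ L, w <+ v ∧ w ≠ v := by
        by_contra! h
        exact hmin ⟨hv, h⟩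
      obtain ⟨v', hv', hv'w, hlen⟩ := ih w (hwv.length_le.lt_of_ne (mt hwv.eq_of_length hne)) hw
      exact ⟨v', hv', hv'w.trans hwv, hlen⟩

theorem cons_sublist_append_iff_of_notMem {x : α} {A l M : List α} (hx : x ∉ A) :
    x :: l <+ A ++ x :: M ↔ l <+ M := by
  induction A with
  | nil => simp
  | cons y A ih =>
    rw [mem_cons, not_or] at hx
    rw [cons_append, sublist_cons_iff, ih hx.2]
    simp [hx.1]

theorem append_singleton_sublist_iff_of_notMem {y : α} {l M B : List α} (hy : y ∉ B) :
    l ++ [y] <+ M ++ y :: B ↔ l <+ M := by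
  rw [← reverse_sublist]
  simp [cons_sublist_append_iff_of_notMem (A := B.reverse) (by simpa using hy)]

theorem delimited_sublist_iff {x y : α} {A l M B : List α} (hx : x ∉ A) (hy : y ∉ B) :
    x :: (l ++ [y]) <+ A ++ x :: (M ++ y :: B) ↔ l <+ M := by
  rw [cons_sublist_append_iff_of_notMem hx, append_singleton_sublist_iff_of_notMem hy]

end Sublist

/-- `ShrinksWithin n v v'` says that the word `v'` arises from `v` by replacing a factor of length
at most `n` by a proper subsequence of that factor. -/
def ShrinksWithin {α : Type*} (n : ℕ) (v v' : List α) : Prop :=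
  ∃ u m m' z : List α, v = u ++ m ++ z ∧ v' = u ++ m' ++ z ∧
    m.length ≤ n ∧ m' <+ m ∧ m'.length < m.length

namespace ShrinksWithin

variable {α : Type*} {n : ℕ} {v v' : List α}

theorem mono {k : ℕ} (h : ShrinksWithin n v v') (hnk : n ≤ k) : ShrinksWithin k v v' := by
  obtain ⟨u, m, m', z, hv, hv', hm, hsub, hlt⟩ := h
  exact ⟨u, m, m', z, hv, hv', hm.trans hnk, hsub, hlt⟩

theorem append_left (w : List α) (h : ShrinksWithin n v v') :
    ShrinksWithin n (w ++ v) (w ++ v') := by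
  obtain ⟨u, m, m', z, rfl, rfl, h⟩ := h
  exact ⟨w ++ u, m, m', z, by simp, by simp, h⟩

theorem append_right (w : List α) (h : ShrinksWithin n v v') :
    ShrinksWithin n (v ++ w) (v' ++ w) := by
  obtain ⟨u, m, m', z, rfl, rfl, h⟩ := h
  exact ⟨u, m, m', z ++ w, by simp, by simp, h⟩

theorem of_sublist (hsub : v' <+ v) (hne : v' ≠ v) (hv : v.length ≤ n) : ShrinksWithin n v v' :=
  ⟨[], v, v', [], by simp, by simp, hv, hsub,
    hsub.length_le.lt_of_ne (mt hsub.eq_of_length hne)⟩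

theorem sublist (h : ShrinksWithin n v v') : v' <+ v := by
  obtain ⟨u, m, m', z, rfl, rfl, -, hsub, -⟩ := h
  exact (hsub.append_left u).append_right z

theorem length_lt (h : ShrinksWithin n v v') : v'.length < v.length := by
  obtain ⟨u, m, m', z, rfl, rfl, -, -, hlt⟩ := h
  simpa using hlt

theorem length_le (h : ShrinksWithin n v v') : v.length ≤ v'.length + n := by
  obtain ⟨u, m, m', z, rfl, rfl, hm, -, -⟩ := h
  simp only [length_append]
  omega

theorem prefix_or_suffix {P M Q : List α} (h : ShrinksWithin n (P ++ M ++ Q) v')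
    (hM : n ≤ M.length) : P <+: v' ∨ Q <:+ v' := by
  obtain ⟨u, m, m', z, heq, rfl, hm, -, -⟩ := h
  have hlen := congrArg length heq
  simp only [length_append] at hlen
  rcases le_or_gt P.length u.length with hP | hP
  · have hPu : P <+: u := prefix_of_prefix_length_le (l₃ := u ++ m ++ z)
      ⟨M ++ Q, by simp [← heq]⟩ ⟨m ++ z, by simp⟩ hP
    exact .inl (hPu.trans ⟨m' ++ z, by simp⟩)
  · have hQz : Q <:+ z := suffix_of_suffix_length_le (l₃ := u ++ m ++ z)
      ⟨P ++ M, heq⟩ ⟨u ++ m, rfl⟩ (by omega)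
    exact .inr (hQz.trans ⟨u ++ m', rfl⟩)

end ShrinksWithin

/-- Big-step derivations of a context-free grammar: `Yields g γ v` says that the sentential form `γ`
derives the word `v`. In contrast to `ContextFreeGrammar.Derives`, a proof is a parse forest with
one tree for each symbol of `γ`. -/
inductive Yields {T : Type*} (g : ContextFreeGrammar T) : List (Symbol T g.NT) → List T → Prop
  | nil : Yields g [] []
  | terminal (t : T) {γ : List (Symbol T g.NT)} {v : List T} (h : Yields g γ v) :
      Yields g (.terminal t :: γ) (t :: v)
  | nonterminal {r : ContextFreeRule T g.NT} (hr : r ∈ g.rules) {γ : List (Symbol T g.NT)}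
      {v w : List T} (hv : Yields g r.output v) (hw : Yields g γ w) :
      Yields g (.nonterminal r.input :: γ) (v ++ w)

namespace Yields

variable {T : Type*} {g : ContextFreeGrammar T}

theorem append {γ δ : List (Symbol T g.NT)} {v w : List T} (hv : Yields g γ v)
    (hw : Yields g δ w) : Yields g (γ ++ δ) (v ++ w) := by
  induction hv with
  | nil => exact hw
  | terminal t _ ih => exact .terminal t ih
  | nonterminal hr hv _ _ ih => simpa using Yields.nonterminal hr hv ih

theorem exists_of_append {γ δ : List (Symbol T g.NT)} {x : List T} (h : Yields g (γ ++ δ) x) :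
    ∃ v w, x = v ++ w ∧ Yields g γ v ∧ Yields g δ w := by
  induction γ generalizing x with
  | nil => exact ⟨[], x, rfl, .nil, h⟩
  | cons s γ ih =>
    cases h with
    | terminal t h =>
      obtain ⟨v, w, rfl, hv, hw⟩ := ih h
      exact ⟨t :: v, w, rfl, .terminal t hv, hw⟩
    | nonterminal hr hy h =>
      obtain ⟨v, w, rfl, hv, hw⟩ := ih h
      exact ⟨_ ++ v, w, by simp, .nonterminal hr hy hv, hw⟩

theorem map_terminal (v : List T) : Yields g (v.map .terminal) v := by
  induction v with
  | nil => exact .nil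
  | cons t v ih => exact .terminal t ih

theorem of_rewrites {r : ContextFreeRule T g.NT} (hr : r ∈ g.rules) {γ δ : List (Symbol T g.NT)}
    (h : r.Rewrites γ δ) {v : List T} (hv : Yields g δ v) : Yields g γ v := by
  induction h generalizing v with
  | head s =>
    obtain ⟨x, y, rfl, hx, hy⟩ := hv.exists_of_append
    exact .nonterminal hr hx hy
  | cons s _ ih =>
    cases hv with
    | terminal t h => exact .terminal t (ih h)
    | nonterminal hr' hx hy => exact .nonterminal hr' hx (ih hy)

end Yields

theorem yields_iff_derives {T : Type*} {g : ContextFreeGrammar T} {γ : List (Symbol T g.NT)}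
    {v : List T} : Yields g γ v ↔ g.Derives γ (v.map .terminal) := by
  constructor
  · intro h
    induction h with
    | nil => exact .refl _
    | terminal t _ ih => exact ih.append_left [.terminal t]
    | @nonterminal r hr γ v w _ _ ihv ihw =>
      have hstep : g.Produces (.nonterminal r.input :: γ) (r.output ++ γ) := ⟨r, hr, .head γ⟩
      rw [map_append]
      exact hstep.trans_derives ((ihv.append_right γ).trans (ihw.append_left _))
  · intro h
    induction h using Relation.ReflTransGen.head_induction_on with
    | refl => exact .map_terminal v
    | head hstep _ ih =>
      obtain ⟨r, hr, hrw⟩ := hstep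
      exact .of_rewrites hr hrw ih

/-- Here `K` bounds the subsequence-minimal words derived from a single nonterminal. A lowest node
of the parse forest with a non-minimal yield has a rule output of at most `R` symbols below it, each
of which yields at most `K + 1` letters. -/
theorem Yields.length_le_or_exists_shrinksWithin {T : Type*} {g : ContextFreeGrammar T} {K R : ℕ}
    (hK : ∀ r ∈ g.rules, ∀ v, Yields g [.nonterminal r.input] v →
      ∃ v', Yields g [.nonterminal r.input] v' ∧ v' <+ v ∧ v'.length ≤ K)
    (hR : ∀ r ∈ g.rules, r.output.length ≤ R)
    {γ : List (Symbol T g.NT)} {v : List T} (h : Yields g γ v) :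
    v.length ≤ (K + 1) * γ.length ∨ ∃ v', Yields g γ v' ∧ ShrinksWithin ((K + 1) * R) v v' := by
  induction h with
  | nil => simp
  | terminal t _ ih =>
    rcases ih with hlen | ⟨v', hv', hshrink⟩
    · left
      simp only [length_cons]
      lia
    · exact .inr ⟨t :: v', .terminal t hv', hshrink.append_left [t]⟩
  | @nonterminal r hr γ v w hv hw ihv ihw =>
    rcases ihv with hlenv | ⟨v', hv', hshrink⟩
    · obtain ⟨v', hv', hsub, hlen'⟩ := hK r hr v (by simpa using Yields.nonterminal hr hv .nil)
      by_cases hne : v' = v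
      · subst hne
        rcases ihw with hlenw | ⟨w', hw', hshrink⟩
        · left
          simp only [length_cons, length_append]
          lia
        · exact .inr ⟨v' ++ w', .nonterminal hr hv hw', hshrink.append_left v'⟩
      · have hshort : v.length ≤ (K + 1) * R := hlenv.trans (Nat.mul_le_mul_left _ (hR r hr))
        have hshrink := ShrinksWithin.of_sublist hsub hne hshort
        exact .inr ⟨v' ++ w, hv'.append hw, hshrink.append_right w⟩
    · exact .inr ⟨v' ++ w, .nonterminal hr hv' hw, hshrink.append_right w⟩

theorem exists_shrinksWithin_of_isContextFree {T : Type*} [Finite T] {L : Language T}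
    (hL : L.IsContextFree) :
    ∃ p : ℕ, ∀ s ∈ L, p ≤ s.length → ∃ s' ∈ L, ShrinksWithin p s s' := by
  obtain ⟨g, rfl⟩ := hL
  choose k hk using fun A : g.NT =>
    exists_forall_exists_sublist_length_le {v | Yields g [.nonterminal A] v}
  let K := g.rules.sup fun r => k r.input
  let R := g.rules.sup fun r => r.output.length
  have hK : ∀ r ∈ g.rules, ∀ v, Yields g [.nonterminal r.input] v →
      ∃ v', Yields g [.nonterminal r.input] v' ∧ v' <+ v ∧ v'.length ≤ K := fun r hr v hv =>
    let ⟨v', hv', hsub, hlen⟩ := hk r.input v hv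
    ⟨v', hv', hsub, hlen.trans (Finset.le_sup (f := fun r => k r.input) hr)⟩
  have hR : ∀ r ∈ g.rules, r.output.length ≤ R := fun r hr =>
    Finset.le_sup (f := fun r => r.output.length) hr
  refine ⟨(K + 1) * R + (K + 2), fun s hs hlen => ?_⟩
  rw [g.mem_language_iff, ← yields_iff_derives] at hs
  rcases hs.length_le_or_exists_shrinksWithin hK hR with hshort | ⟨s', hs', hshrink⟩
  · rw [length_singleton] at hshort
    lia
  · rw [yields_iff_derives, ← g.mem_language_iff] at hs'
    exact ⟨s', hs', hshrink.mono (Nat.le_add_right _ _)⟩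

instance : Fintype Alph where
  elems := {.lb, .rb, .imp, .all, .deq, .mem, .w, .prime, .bot}
  complete x := by cases x <;> decide

@[simp]
theorem mem_varStr {x : Alph} {n : ℕ} : x ∈ varStr n ↔ x = .w ∨ n ≠ 0 ∧ x = .prime := by
  simp [varStr]

@[simp]
theorem length_varStr (n : ℕ) : (varStr n).length = n + 1 := by
  simp [varStr]

@[simp]
theorem varStr_sublist_varStr {m n : ℕ} : varStr m <+ varStr n ↔ m ≤ n := by
  simp [varStr]

/-- The word obtained by erasing all primes, i.e. by identifying all variables. -/
def skeleton (s : List Alph) : List Alph := s.filter (· ≠ .prime)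

@[simp]
theorem skeleton_nil : skeleton [] = [] := rfl

@[simp]
theorem skeleton_cons_of_ne {x : Alph} (hx : x ≠ .prime) (s : List Alph) :
    skeleton (x :: s) = x :: skeleton s :=
  filter_cons_of_pos (by simpa using hx)

@[simp]
theorem skeleton_append (s t : List Alph) : skeleton (s ++ t) = skeleton s ++ skeleton t :=
  filter_append s t

theorem skeleton_sublist_skeleton {s t : List Alph} (h : s <+ t) : skeleton s <+ skeleton t :=
  h.filter _

@[simp]
theorem skeleton_varStr (n : ℕ) : skeleton (varStr n) = [.w] := by
  simp [skeleton, varStr]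

/-- Atomic formulae have three symbols besides primes, and an implication adds three to those of
its two parts. -/
theorem Fm.length_skeleton_mod_six (φ : Fm) (hbot : .bot ∉ φ.str) (hall : .all ∉ φ.str) :
    (skeleton φ.str).length % 6 = 3 := by
  induction φ with
  | bot => simp [Fm.str] at hbot
  | eq x y => simp [Fm.str]
  | mem x y => simp [Fm.str]
  | imp φ ψ ihφ ihψ =>
    simp only [Fm.str, mem_append, not_or] at hbot hall
    have hlen : (skeleton (Fm.imp φ ψ).str).length =
        (skeleton φ.str).length + (skeleton ψ.str).length + 3 := by simp +arith [Fm.str]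
    have hφ := ihφ hbot.1.1.1.2 hall.1.1.1.2
    have hψ := ihψ hbot.1.2 hall.1.2
    rw [hlen, Nat.add_mod, Nat.add_mod (skeleton φ.str).length, hφ, hψ]
  | all x φ => simp [Fm.str] at hall

/-- The formula `[w'^a ≐ w'^b → w'^c ∈ w'^d]`. -/
def eqImpMem (a b c d : ℕ) : Fm := .imp (.eq a b) (.mem c d)

namespace eqImpMem

variable {a b c d n : ℕ}

theorem stratified_iff : (eqImpMem a b c d).Stratified ↔ c ≠ d ∧ s(a, b) ≠ s(c, d) := by
  simp only [Fm.Stratified, eqImpMem, Fm.memPairs, Fm.eqPairs, Finset.empty_union,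
    Finset.union_empty, Finset.mem_singleton, forall_eq]
  constructor
  · rintro ⟨σ, hmem, heq⟩
    grind
  · rintro ⟨hne, hpair⟩
    -- `d`, together with everything identified with it by `a ≐ b`, gets type 1, the rest type 0.
    refine ⟨fun v => if v = d ∨ (d = a ∨ d = b) ∧ (v = a ∨ v = b) then 1 else 0, ?_, ?_⟩ <;> grind

theorem str_eq : (eqImpMem a b c d).str = .lb :: varStr a ++ .deq :: varStr b ++
    .imp :: varStr c ++ .mem :: varStr d ++ [.rb] := by
  simp [eqImpMem, Fm.str]

theorem length_str : (eqImpMem a b c d).str.length = a + b + c + d + 9 := by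
  simp +arith [str_eq]

theorem skeleton_str :
    skeleton (eqImpMem a b c d).str = [.lb, .w, .deq, .w, .imp, .w, .mem, .w, .rb] := by
  simp [str_eq]

theorem exists_eq_of_skeleton_eq {φ : Fm}
    (h : skeleton φ.str = [.lb, .w, .deq, .w, .imp, .w, .mem, .w, .rb]) :
    ∃ a b c d, φ = eqImpMem a b c d := by
  rcases φ with _ | _ | _ | ⟨φ, ψ⟩ | _
  case imp =>
    cases φ <;> simp [Fm.str] at h
    cases ψ <;> simp [Fm.str] at h
    exact ⟨_, _, _, _, rfl⟩
  all_goals simp [Fm.str] at h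

theorem lb_varStr_deq_sublist_str :
    .lb :: (varStr n ++ [.deq]) <+ (eqImpMem a b c d).str ↔ n ≤ a := by
  have hstr : (eqImpMem a b c d).str = [] ++ .lb :: (varStr a ++ .deq :: (varStr b ++
    .imp :: varStr c ++ .mem :: varStr d ++ [.rb])) := by simp [str_eq]
  rw [hstr, delimited_sublist_iff (by simp) (by simp), varStr_sublist_varStr]

theorem deq_varStr_imp_sublist_str :
    .deq :: (varStr n ++ [.imp]) <+ (eqImpMem a b c d).str ↔ n ≤ b := by
  have hstr : (eqImpMem a b c d).str = .lb :: varStr a ++ .deq :: (varStr b ++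
    .imp :: (varStr c ++ .mem :: varStr d ++ [.rb])) := by simp [str_eq]
  rw [hstr, delimited_sublist_iff (by simp) (by simp), varStr_sublist_varStr]

theorem imp_varStr_mem_sublist_str :
    .imp :: (varStr n ++ [.mem]) <+ (eqImpMem a b c d).str ↔ n ≤ c := by
  have hstr : (eqImpMem a b c d).str = .lb :: varStr a ++ .deq :: varStr b ++
    .imp :: (varStr c ++ .mem :: (varStr d ++ [.rb])) := by simp [str_eq]
  rw [hstr, delimited_sublist_iff (by simp) (by simp), varStr_sublist_varStr]

theorem mem_varStr_rb_sublist_str :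
    .mem :: (varStr n ++ [.rb]) <+ (eqImpMem a b c d).str ↔ n ≤ d := by
  have hstr : (eqImpMem a b c d).str = .lb :: varStr a ++ .deq :: varStr b ++
    .imp :: varStr c ++ .mem :: (varStr d ++ .rb :: []) := by simp [str_eq]
  rw [hstr, delimited_sublist_iff (by simp) (by simp), varStr_sublist_varStr]

/-- By `Fm.length_skeleton_mod_six`, a formula below `[x ≐ y → z ∈ t]` in the subsequence order has
three or nine symbols besides primes. -/
theorem exists_eq_of_str_sublist {φ : Fm} (hsub : φ.str <+ (eqImpMem a b c d).str)
    (hlen : 3 < (skeleton φ.str).length) : ∃ a' b' c' d', φ = eqImpMem a' b' c' d' := by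
  have hskel : skeleton φ.str <+ skeleton (eqImpMem a b c d).str :=
    skeleton_sublist_skeleton hsub
  have hbot : .bot ∉ φ.str := fun h => by simpa [str_eq] using hsub.subset h
  have hall : .all ∉ φ.str := fun h => by simpa [str_eq] using hsub.subset h
  rw [skeleton_str] at hskel
  have hle : (skeleton φ.str).length ≤ 9 := hskel.length_le
  have hmod := φ.length_skeleton_mod_six hbot hall
  exact exists_eq_of_skeleton_eq (hskel.eq_of_length (by simp only [length_cons, length_nil]; lia))

theorem le_of_str_sublist {a' b' c' d' : ℕ}
    (h : (eqImpMem a' b' c' d').str <+ (eqImpMem a b c d).str) :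
    a' ≤ a ∧ b' ≤ b ∧ c' ≤ c ∧ d' ≤ d :=
  ⟨lb_varStr_deq_sublist_str.1 ((lb_varStr_deq_sublist_str.2 le_rfl).trans h),
    deq_varStr_imp_sublist_str.1 ((deq_varStr_imp_sublist_str.2 le_rfl).trans h),
    imp_varStr_mem_sublist_str.1 ((imp_varStr_mem_sublist_str.2 le_rfl).trans h),
    mem_varStr_rb_sublist_str.1 ((mem_varStr_rb_sublist_str.2 le_rfl).trans h)⟩

section Shrinking

variable {p a' b' c' d' : ℕ}

theorem prefix_or_suffix_of_le_second {s : List Alph}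
    (h : ShrinksWithin p (eqImpMem a b c d).str s) (hp : p ≤ b) :
    .lb :: varStr a ++ [.deq, .w] <+: s ∨
      .imp :: varStr c ++ .mem :: varStr d ++ [.rb] <:+ s := by
  have hstr : (eqImpMem a b c d).str = (.lb :: varStr a ++ [.deq, .w]) ++ replicate b .prime ++
      (.imp :: varStr c ++ .mem :: varStr d ++ [.rb]) := by simp [str_eq, varStr]
  rw [hstr] at h
  exact h.prefix_or_suffix (by simpa using hp)

theorem prefix_or_suffix_of_le_third {s : List Alph}
    (h : ShrinksWithin p (eqImpMem a b c d).str s) (hp : p ≤ c) :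
    .lb :: varStr a ++ .deq :: varStr b ++ [.imp] <+: s ∨ .mem :: varStr d ++ [.rb] <:+ s := by
  have hstr : (eqImpMem a b c d).str = (.lb :: varStr a ++ .deq :: varStr b ++ [.imp]) ++
      varStr c ++ (.mem :: varStr d ++ [.rb]) := by simp [str_eq]
  rw [hstr] at h
  exact h.prefix_or_suffix (by simpa using Nat.le_succ_of_le hp)

theorem three_lt_length_skeleton {s : List Alph}
    (h : ShrinksWithin p (eqImpMem a b c d).str s) (hp : p ≤ b) :
    3 < (skeleton s).length := by
  rcases prefix_or_suffix_of_le_second h hp with hpre | hsuf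
  · have hle : 4 ≤ (skeleton s).length := by
      simpa using (skeleton_sublist_skeleton hpre.sublist).length_le
    lia
  · have hle : 5 ≤ (skeleton s).length := by
      simpa using (skeleton_sublist_skeleton hsuf.sublist).length_le
    lia

theorem first_le_or_third_le
    (h : ShrinksWithin p (eqImpMem a b c d).str (eqImpMem a' b' c' d').str) (hp : p ≤ b) :
    a ≤ a' ∨ c ≤ c' := by
  rcases prefix_or_suffix_of_le_second h hp with hpre | hsuf
  · exact .inl (lb_varStr_deq_sublist_str.1 (.trans (by simp) hpre.sublist))
  · exact .inr (imp_varStr_mem_sublist_str.1 (.trans (by simp) hsuf.sublist))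

theorem second_le_or_fourth_le
    (h : ShrinksWithin p (eqImpMem a b c d).str (eqImpMem a' b' c' d').str) (hp : p ≤ c) :
    b ≤ b' ∨ d ≤ d' := by
  rcases prefix_or_suffix_of_le_third h hp with hpre | hsuf
  · exact .inl (deq_varStr_imp_sublist_str.1 (.trans (by simp) hpre.sublist))
  · exact .inr (mem_varStr_rb_sublist_str.1 (.trans (by simp) hsuf.sublist))

theorem stratified_of_shrinksWithin {φ : Fm} (hpa : p ≤ a) (hab : a + p < b)
    (h : ShrinksWithin p (eqImpMem a b a b).str φ.str) : φ.Stratified := by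
  have hskel := three_lt_length_skeleton h (by lia)
  obtain ⟨a', b', c', d', rfl⟩ := exists_eq_of_str_sublist h.sublist hskel
  have hle := le_of_str_sublist h.sublist
  have hac := first_le_or_third_le h (by lia)
  have hbd := second_le_or_fourth_le h hpa
  have hlt := h.length_lt
  have hlen := h.length_le
  simp only [length_str] at hlt hlen
  have hcd : c' < d' := by lia
  refine stratified_iff.2 ⟨hcd.ne, fun hpair => ?_⟩
  rcases Sym2.eq_iff.1 hpair with ⟨rfl, rfl⟩ | ⟨rfl, rfl⟩
  · have ha : a' = a := by lia
    have hb : b' = b := by lia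
    lia
  · lia

end Shrinking

end eqImpMem

/-- The language of unstratified formulae of set theory is not context-free. -/
theorem unstratified_not_contextFree :
    ¬ Language.IsContextFree {s : List Alph | ∃ φ : Fm, ¬ φ.Stratified ∧ φ.str = s} := by
  intro hL
  obtain ⟨p, hp⟩ := exists_shrinksWithin_of_isContextFree hL
  let φ := eqImpMem p (2 * p + 1) p (2 * p + 1)
  have hφ : ¬ φ.Stratified := by simp [φ, eqImpMem.stratified_iff]
  have hlong : p ≤ φ.str.length := by
    rw [eqImpMem.length_str]
    lia
  obtain ⟨_, ⟨ψ, hψ, rfl⟩, hshrink⟩ := hp φ.str ⟨φ, hφ, rfl⟩ hlong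
  exact hψ (eqImpMem.stratified_of_shrinksWithin le_rfl (by lia) hshrink)
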